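/- Let e, h, f be an sl₂-triple in a complex semisimple Lie algebra g, with grading g = ⊕_i g(i) by ad(h)-eigenvalues. Then the bilinear form on g(−1) defined by ⟨x, y⟩ = (e, [x,y]) (where (,) is the Killing form) is skew-symmetric and non-degenerate. -/

import Mathlib

open Module

open Polynomial

/-- An endomorphism scaled by a commutator with nonzero weight is nilpotent. -/
lemma aux_nilp {V : Type*} [AddCommGroup V] [Module ℂ V] [FiniteDimensional ℂ V]
    (H E : Module.End ℂ V) (c : ℂ) (hc : c ≠ 0) (hE : H * E - E * H = c • E) :
    ∃ k, E ^ k = 0 := by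
  by_contra! contra
  have hk : ∀ k : ℕ, H * E ^ k - E ^ k * H = ((k : ℂ) * c) • E ^ k := by
    intro k
    induction k with
    | zero => simp
    | succ k ih =>
      have h1 : H * E ^ (k + 1) - E ^ (k + 1) * H
          = (H * E ^ k - E ^ k * H) * E + E ^ k * (H * E - E * H) := by
        rw [pow_succ]; noncomm_ring
      rw [h1, ih, hE, smul_mul_assoc, mul_smul_comm, ← pow_succ, ← add_smul]
      congr 1; push_cast; ring
  let D : Module.End ℂ (Module.End ℂ V) := LinearMap.mulLeft ℂ H - LinearMap.mulRight ℂ H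
  have hinj : Function.Injective (fun k : ℕ ↦ (k : ℂ) * c) := by
    intro a b hab
    simpa [hc] using hab
  have hli := Module.End.eigenvectors_linearIndependent' D (fun k : ℕ ↦ (k : ℂ) * c) hinj
    (fun k ↦ E ^ k) (fun k ↦ by
      rw [Module.End.hasEigenvector_iff]
      refine ⟨?_, contra k⟩
      rw [Module.End.mem_eigenspace_iff]
      simpa [D] using hk k)
  have := hli.finite
  exact not_finite ℕ

/-- The polynomial `∏ (X - j²)`, `1 ≤ j ≤ n`. -/
noncomputable def auxQ : ℕ → ℂ[X]
  | 0 => 1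
  | n + 1 => auxQ n * (X - C (((n : ℂ) + 1) ^ 2))

/-- The first order term of `∏ (X - j² + j t)`. -/
noncomputable def auxS : ℕ → ℂ[X]
  | 0 => 0
  | n + 1 => auxS n * (X - C (((n : ℂ) + 1) ^ 2)) + C ((n : ℂ) + 1) * auxQ n

lemma aux_coprime_X (m n : ℕ) (hmn : n < m) :
    IsCoprime (X - C ((m : ℂ) ^ 2)) (auxQ n) := by
  induction n with
  | zero => simpa [auxQ] using isCoprime_one_right
  | succ n ih =>
    rw [auxQ]
    refine IsCoprime.mul_right (ih (by omega)) ?_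
    apply Polynomial.isCoprime_X_sub_C_of_isUnit_sub
    rw [isUnit_iff_ne_zero, sub_ne_zero]
    have : m ^ 2 ≠ (n + 1) ^ 2 := by
      intro h
      have := Nat.pow_left_injective (n := 2) (by norm_num) h
      omega
    exact_mod_cast this

lemma aux_coprime (n : ℕ) : IsCoprime (auxQ n) (auxS n) := by
  induction n with
  | zero => simpa [auxQ] using isCoprime_one_left
  | succ n ih =>
    have h0 := aux_coprime_X (n + 1) n (by omega)
    push_cast at h0
    rw [auxQ, auxS]
    refine IsCoprime.mul_left ?_ ?_
    · exact IsCoprime.add_mul_right_right (ih.mul_right h0.symm) _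
    · rw [add_comm (auxS n * _)]
      refine IsCoprime.add_mul_right_right (IsCoprime.mul_right ?_ h0) _
      have hu : IsUnit (C ((n : ℂ) + 1)) :=
        Polynomial.isUnit_C.mpr (isUnit_iff_ne_zero.mpr (Nat.cast_add_one_ne_zero n))
      exact isCoprime_comm.mp ((isCoprime_mul_unit_left_left hu 1 _).mpr isCoprime_one_left
        |> fun h ↦ by rwa [mul_one] at h)

lemma aux_Q0 (n : ℕ) : IsCoprime (auxQ n) X := by
  induction n with
  | zero => simpa [auxQ] using isCoprime_one_left
  | succ n ih =>
    rw [auxQ]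
    refine IsCoprime.mul_left ih ?_
    have := Polynomial.isCoprime_X_sub_C_of_isUnit_sub (a := ((n : ℂ) + 1) ^ 2) (b := 0)
      (by rw [isUnit_iff_ne_zero, sub_zero]; exact pow_ne_zero _ (Nat.cast_add_one_ne_zero n))
    simpa using this

section
variable {A : Type*} [Ring A] [Algebra ℂ A] (H E F : A)
  (hE : H * E - E * H = (2 : ℂ) • E) (hF : H * F - F * H = (-2 : ℂ) • F)
  (hEF : E * F - F * E = H)
include hE hF hEF

lemma aux_comm_E (n : ℕ) : (F * E) * E ^ n =
    E ^ n * (F * E - ((n : ℂ) ^ 2) • 1 - (n : ℂ) • (H + 1)) := by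
  have h1 : H * E = E * H + (2 : ℂ) • E := by rw [← hE]; abel
  have h2 : F * E * E = E * (F * E) - E * H - (2 : ℂ) • E := by
    have : F * E = E * F - H := by rw [← hEF]; abel
    calc F * E * E = (E * F - H) * E := by rw [← this]
      _ = E * (F * E) - H * E := by noncomm_ring
      _ = _ := by rw [h1]; abel
  induction n with
  | zero => simp
  | succ n ih =>
    rw [pow_succ, ← mul_assoc, ih, mul_assoc, mul_assoc]
    congr 1
    simp only [sub_mul, mul_sub, smul_mul_assoc, mul_smul_comm, one_mul, mul_one, add_mul,
      mul_add, h1, h2]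
    push_cast
    module

lemma aux_comm_F (n : ℕ) : (E * F) * F ^ n =
    F ^ n * (F * E - (((n : ℂ) + 1) ^ 2) • 1 + ((n : ℂ) + 1) • (H + 1)) := by
  have h1 : H * F = F * H - (2 : ℂ) • F := by
    have : (2 : ℂ) • F = - ((-2 : ℂ) • F) := by module
    rw [this, ← hF]; abel
  have h0 : E * F = F * E + H := by rw [← hEF]; abel
  induction n with
  | zero => simp [h0]
  | succ n ih =>
    have h2 : F * E * F = F * (F * E) + F * H := by rw [mul_assoc, h0, mul_add]
    rw [pow_succ, ← mul_assoc, ih, mul_assoc, mul_assoc]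
    congr 1
    simp only [sub_mul, mul_sub, smul_mul_assoc, mul_smul_comm, one_mul, mul_one, add_mul,
      mul_add, h1, h2]
    push_cast
    module

lemma aux_comm_aT : Commute (H + 1) (F * E) := by
  have h1 : H * E = E * H + (2 : ℂ) • E := by rw [← hE]; abel
  have h2 : H * F = F * H - (2 : ℂ) • F := by
    have : (2 : ℂ) • F = - ((-2 : ℂ) • F) := by module
    rw [this, ← hF]; abel
  have : Commute H (F * E) := by
    show H * (F * E) = F * E * H
    rw [← mul_assoc, h2, sub_mul, mul_assoc, h1, mul_add, mul_assoc]
    simp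
  exact this.add_left (Commute.one_left _)

end

section
variable {V : Type*} [AddCommGroup V] [Module ℂ V] (H E F : Module.End ℂ V)
  (hE : H * E - E * H = (2 : ℂ) • E) (hF : H * F - F * H = (-2 : ℂ) • F)
  (hEF : E * F - F * E = H)
include hE hF hEF

lemma aux_expand_F (n : ℕ) : ∀ v : V, (H + 1) ((H + 1) v) = 0 →
    (E ^ n) ((F ^ n) v) = aeval (F * E) (auxQ n) v + aeval (F * E) (auxS n) ((H + 1) v) := by
  have hc : ∀ w, (H + 1) ((F * E) w) = (F * E) ((H + 1) w) := fun w ↦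
    LinearMap.congr_fun (aux_comm_aT H E F hE hF hEF).eq w
  induction n with
  | zero => intro v _; simp [auxQ, auxS]
  | succ n ih =>
    intro v hv
    set c : ℂ := (n : ℂ) + 1 with hcdef
    have key : (E ^ (n + 1)) ((F ^ (n + 1)) v) =
        (E ^ n) ((F ^ n) ((F * E) v - (c ^ 2) • v + c • (H + 1) v)) := by
      have h := congrArg (fun P ↦ E ^ n * P) (aux_comm_F H E F hE hF hEF n)
      have h' := LinearMap.congr_fun h v
      calc _ = (E ^ n * (E * F * F ^ n)) v := by
            rw [pow_succ, pow_succ' F]; rfl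
        _ = _ := h'
    have hT : (H + 1) ((F * E) v - (c ^ 2) • v + c • (H + 1) v)
        = (F * E) ((H + 1) v) - (c ^ 2) • (H + 1) v := by
      rw [map_add, map_sub, map_smul, map_smul, hv, hc]; simp
    rw [key, ih _ (by rw [hT, map_sub, map_smul, hc, hv]; simp), hT]
    simp only [auxQ, auxS, map_mul, map_add, map_sub, aeval_X, aeval_C, Module.End.mul_apply,
      LinearMap.add_apply, LinearMap.sub_apply, Module.algebraMap_end_apply, map_smul, ← hcdef]
    module

lemma aux_expand_E (n : ℕ) : ∀ v : V, (H + 1) ((H + 1) v) = 0 →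
    (F ^ (n + 1)) ((E ^ (n + 1)) v) = aeval (F * E) (X * auxQ n) v
      - aeval (F * E) (X * auxS n) ((H + 1) v) := by
  have hc : ∀ w, (H + 1) ((F * E) w) = (F * E) ((H + 1) w) := fun w ↦
    LinearMap.congr_fun (aux_comm_aT H E F hE hF hEF).eq w
  induction n with
  | zero => intro v _; simp [auxQ, auxS]
  | succ n ih =>
    intro v hv
    set c : ℂ := (n : ℂ) + 1 with hcdef
    have key : (F ^ (n + 1 + 1)) ((E ^ (n + 1 + 1)) v) =
        (F ^ (n + 1)) ((E ^ (n + 1)) ((F * E) v - (c ^ 2) • v - c • (H + 1) v)) := by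
      have h := congrArg (fun P ↦ F ^ (n + 1) * P) (aux_comm_E H E F hE hF hEF (n + 1))
      have h' := LinearMap.congr_fun h v
      push_cast at h'
      calc _ = (F ^ (n + 1) * (F * E * E ^ (n + 1))) v := by
            rw [pow_succ F (n + 1), pow_succ' E (n + 1)]; rfl
        _ = _ := h'
    have hT : (H + 1) ((F * E) v - (c ^ 2) • v - c • (H + 1) v)
        = (F * E) ((H + 1) v) - (c ^ 2) • (H + 1) v := by
      rw [map_sub, map_sub, map_smul, map_smul, hv, hc]; simp
    rw [key, ih _ (by rw [hT, map_sub, map_smul, hc, hv]; simp), hT]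
    simp only [auxQ, auxS, map_mul, map_add, map_sub, aeval_X, aeval_C, Module.End.mul_apply,
      LinearMap.add_apply, LinearMap.sub_apply, Module.algebraMap_end_apply, map_smul, ← hcdef]
    module

lemma aux_kill (a : Module.End ℂ V) (p q : ℂ[X]) (hpq : IsCoprime p q) (w : V)
    (hp : aeval a p w = 0) (hq : aeval a q w = 0) : w = 0 := by
  obtain ⟨u, v, huv⟩ := hpq
  have := congrArg (fun r ↦ aeval a r w) huv
  simpa [hp, hq] using this.symm

/-- There is no Jordan block of `H` at the eigenvalue `-1`. -/
lemma aux_semisimple [FiniteDimensional ℂ V] (v : V) (hv : (H + 1) ((H + 1) v) = 0) :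
    (H + 1) v = 0 := by
  obtain ⟨k, hk⟩ := aux_nilp H E 2 (by norm_num) hE
  obtain ⟨l, hl⟩ := aux_nilp H F (-2) (by norm_num) hF
  set n := k + l
  have hEn : E ^ (n + 1) = 0 := pow_eq_zero_of_le (by omega) hk
  have hFn : F ^ n = 0 := pow_eq_zero_of_le (by omega) hl
  have h1 := aux_expand_F H E F hE hF hEF n v hv
  have h2 := aux_expand_E H E F hE hF hEF n v hv
  have h3 := aux_expand_F H E F hE hF hEF n ((H + 1) v) (by rw [hv, map_zero])
  rw [hFn, hv] at h3
  rw [hFn] at h1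
  rw [hEn] at h2
  simp only [LinearMap.zero_apply, map_zero, add_zero] at h1 h2 h3
  refine aux_kill H E F hE hF hEF (F * E) (auxQ n) (X * auxS n)
    ((aux_Q0 n).mul_right (aux_coprime n)) _ h3.symm ?_
  rw [map_mul, Module.End.mul_apply] at h2 ⊢
  rw [eq_neg_of_add_eq_zero_left h1.symm, map_neg, map_mul, Module.End.mul_apply] at h2
  have h4 : (2 : ℂ) • (aeval (F * E) (X : ℂ[X])) (aeval (F * E) (auxS n) ((H + 1) v)) = 0 := by
    rw [two_smul, ← neg_eq_zero, h2]; abel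
  exact (smul_eq_zero.mp h4).resolve_left two_ne_zero

/-- `E` is injective on the `-1` eigenspace of `H`. -/
lemma aux_inj [FiniteDimensional ℂ V] (v : V) (hv : (H + 1) v = 0) (hev : E v = 0) : v = 0 := by
  obtain ⟨l, hl⟩ := aux_nilp H F (-2) (by norm_num) hF
  have h1 := aux_expand_F H E F hE hF hEF l v (by rw [hv, map_zero])
  rw [hl, hv] at h1
  simp only [LinearMap.zero_apply, map_zero, add_zero] at h1
  exact aux_kill H E F hE hF hEF (F * E) (auxQ l) X (aux_Q0 l) _ h1.symm (by simp [hev])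

end

/-- Let `(e, h, f)` be an `sl₂`-triple in a complex semisimple Lie algebra `g`, and let
`g(i)` denote the `ad(h)`-eigenspace of eigenvalue `i`.  Then the bilinear form
`⟨x, y⟩ = κ(e, [x, y])` on `g(−1)` (where `κ` is the Killing form) is skew-symmetric
and non-degenerate. -/
theorem sl2_form_skew_nondegenerate
    {L : Type*} [LieRing L] [LieAlgebra ℂ L]
    [FiniteDimensional ℂ L] [LieAlgebra.IsSemisimple ℂ L]
    (e h f : L)
    (hhe : ⁅h, e⁆ = (2 : ℂ) • e) (hhf : ⁅h, f⁆ = (-2 : ℂ) • f) (hef : ⁅e, f⁆ = h) :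
    (∀ x ∈ Module.End.eigenspace (LieAlgebra.ad ℂ L h) (-1),
      ∀ y ∈ Module.End.eigenspace (LieAlgebra.ad ℂ L h) (-1),
        killingForm ℂ L e ⁅x, y⁆ = - killingForm ℂ L e ⁅y, x⁆) ∧
    (∀ x ∈ Module.End.eigenspace (LieAlgebra.ad ℂ L h) (-1),
      (∀ y ∈ Module.End.eigenspace (LieAlgebra.ad ℂ L h) (-1),
        killingForm ℂ L e ⁅x, y⁆ = 0) → x = 0) := by
  refine ⟨fun x _ y _ ↦ by rw [← lie_skew x y, map_neg], fun x hx hxy ↦ ?_⟩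
  set H := LieAlgebra.ad ℂ L h with hH
  set E := LieAlgebra.ad ℂ L e with hEd
  set F := LieAlgebra.ad ℂ L f with hFd
  have hE : H * E - E * H = (2 : ℂ) • E := by
    ext w
    show ⁅h, ⁅e, w⁆⁆ - ⁅e, ⁅h, w⁆⁆ = (2 : ℂ) • ⁅e, w⁆
    rw [← lie_lie, hhe, smul_lie]
  have hF : H * F - F * H = (-2 : ℂ) • F := by
    ext w
    show ⁅h, ⁅f, w⁆⁆ - ⁅f, ⁅h, w⁆⁆ = (-2 : ℂ) • ⁅f, w⁆
    rw [← lie_lie, hhf, smul_lie]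
  have hEF : E * F - F * E = H := by
    ext w
    show ⁅e, ⁅f, w⁆⁆ - ⁅f, ⁅e, w⁆⁆ = ⁅h, w⁆
    rw [← lie_lie, hef]
  have hmem : ∀ y, y ∈ Module.End.eigenspace H (-1) ↔ (H + 1) y = 0 := by
    intro y
    rw [Module.End.mem_eigenspace_iff, LinearMap.add_apply, Module.End.one_apply, neg_one_smul,
      eq_neg_iff_add_eq_zero]
  have hx' := (hmem x).mp hx
  have hhx : ⁅h, x⁆ = - x := by
    have := Module.End.mem_eigenspace_iff.mp hx
    simpa [hH] using this
  refine aux_inj H E F hE hF hEF x hx' ?_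
  have hz : ⁅h, ⁅e, x⁆⁆ = ⁅e, x⁆ := by
    rw [leibniz_lie, hhe, hhx, smul_lie, lie_neg]; module
  have hdis : Disjoint (LinearMap.ker (H + 1)) (LinearMap.range (H + 1)) := by
    rw [Submodule.disjoint_def]
    rintro y hy ⟨w, rfl⟩
    exact aux_semisimple H E F hE hF hEF w hy
  have htop : LinearMap.ker (H + 1) ⊔ LinearMap.range (H + 1) = ⊤ := by
    apply Submodule.eq_top_of_disjoint _ _ _ hdis
    rw [add_comm, LinearMap.finrank_range_add_finrank_ker]
  show ⁅e, x⁆ = 0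
  apply (LieAlgebra.IsKilling.killingForm_nondegenerate ℂ L).1
  intro u
  have hu : u ∈ LinearMap.ker (H + 1) ⊔ LinearMap.range (H + 1) := by rw [htop]; trivial
  obtain ⟨y, hy, _, ⟨w, rfl⟩, rfl⟩ := Submodule.mem_sup.mp hu
  rw [map_add]
  have h1 : killingForm ℂ L ⁅e, x⁆ y = 0 := by
    rw [LieModule.traceForm_apply_lie_apply]
    exact hxy y ((hmem y).mpr hy)
  have h2 : killingForm ℂ L ⁅e, x⁆ ((H + 1) w) = 0 := by
    have h3 := LieModule.traceForm_apply_lie_apply' ℂ L L h ⁅e, x⁆ w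
    rw [hz] at h3
    rw [LinearMap.add_apply, Module.End.one_apply, map_add]
    show killingForm ℂ L ⁅e, x⁆ ⁅h, w⁆ + _ = 0
    exact add_eq_zero_iff_eq_neg.mpr (by rw [← neg_eq_iff_eq_neg]; exact h3.symm)
  rw [h1, h2, add_zero]
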